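/- arXiv:2310.19698 — 3 statements merged into one kernel-verified Lean document; each statement's English description precedes it below -/
import Mathlib

section
/- For every vocabulary size V > 0 and context size N > 0, there exist a transformer (of the simplified decoder-only form described in the context) with vocabulary size V, context size N, embedding dimension d_e = N, a single attention block with two heads, a three-layer MLP, and an inverse temperature T > 0, such that for every token sequence (Y_1, ..., Y_N) ∈ {1,...,V}^N, greedy autoregressive generation started from the single virtual-token input s_1 = ((Y_1 − 1)/V, ..., (Y_N − 1)/V) produces exactly the sequence (Y_1, ..., Y_N). In particular, by varying a single virtual token the model can generate all V^N possible completions of length N. -/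
open Matrix Real

/-- Softmax attention weight of query position `i` on key position `j` for one head with query
and key matrices `Wq, Wk` and inverse temperature `T`. -/
noncomputable def headAttn {k din p : ℕ} (T : ℝ)
    (Wq Wk : Matrix (Fin k) (Fin din) ℝ) (x : Fin p → Fin din → ℝ) (i j : Fin p) : ℝ :=
  exp (T / Real.sqrt k * (Wq.mulVec (x i) ⬝ᵥ Wk.mulVec (x j))) /
    ∑ r, exp (T / Real.sqrt k * (Wq.mulVec (x i) ⬝ᵥ Wk.mulVec (x r)))

/-- Output of a multi-head attention block at position `i`:
`t_i = Σ_h Σ_j A^h_{ij} W_V^h x_j`. -/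
noncomputable def attnBlock {k din dout p H : ℕ} (T : ℝ)
    (Wq Wk : Fin H → Matrix (Fin k) (Fin din) ℝ)
    (Wv : Fin H → Matrix (Fin dout) (Fin din) ℝ)
    (x : Fin p → Fin din → ℝ) (i : Fin p) : Fin dout → ℝ :=
  ∑ h, ∑ j, headAttn T (Wq h) (Wk h) x i j • (Wv h).mulVec (x j)

/-- One MLP layer: a linear map with bias, optionally ReLU-activated. -/
noncomputable def mlpLayer {a b : ℕ} (M : Matrix (Fin b) (Fin a) ℝ) (bias : Fin b → ℝ)
    (act : Bool) (x : Fin a → ℝ) : Fin b → ℝ :=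
  fun u => if act then max 0 (M.mulVec x u + bias u) else M.mulVec x u + bias u

/-- One-hot position encoding `e_N(i)` for position `i` in a context of size `N`. -/
def posEnc (N : ℕ) (i : ℕ) : Fin N → ℝ := fun n => (if (n : ℕ) = i then 1 else 0)

/-!
As the inverse temperature tends to infinity, softmax attention becomes a lookup of the best-scoring
position. Scoring by position encodings, one head looks up the virtual token `s` at position `0` and
the other looks up the position encoding `e_i` at the last position `i`, so the attention output
tends to `s + e_i`. Since the entries of `s` lie in `[0, 1]`, the vector `ReLU(s + e_i - 1)` has
`s_i = Y_i / V` as its only possibly nonzero entry. The second layer recovers `y = Y_i` from it, and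
the third produces the logits `2 w y - w² = y² - (w - y)²`, which are largest exactly at `w = Y_i`.
There are finitely many pairs `(Y, i)` and the MLP is continuous, so these strict inequalities
already hold at every sufficiently large finite inverse temperature.
-/

open Filter Topology

theorem tendsto_softmax_atTop {ι : Type*} [Fintype ι] [DecidableEq ι] {f : ι → ℝ} {m : ι}
    (hm : ∀ j, j ≠ m → f j < f m) :
    Tendsto (fun t j => exp (t * f j) / ∑ r, exp (t * f r)) atTop (𝓝 (Pi.single m 1)) := by
  have hgap : Tendsto (fun t r => exp (t * (f r - f m))) atTop (𝓝 (Pi.single m 1)) := by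
    refine tendsto_pi_nhds.2 fun r => ?_
    rcases eq_or_ne r m with rfl | hr
    · simp
    · rw [Pi.single_eq_of_ne hr]
      exact tendsto_exp_atBot.comp (tendsto_id.atTop_mul_const_of_neg (sub_neg.2 (hm r hr)))
  have hsum : Tendsto (fun t => ∑ r, exp (t * (f r - f m))) atTop (𝓝 1) := by
    simpa using tendsto_finsetSum Finset.univ fun r _ => tendsto_pi_nhds.1 hgap r
  refine tendsto_pi_nhds.2 fun j => ?_
  have hquot := (tendsto_pi_nhds.1 hgap j).div hsum one_ne_zero
  rw [div_one] at hquot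
  refine hquot.congr fun t => ?_
  simp only [Pi.div_apply, mul_sub, exp_sub, ← Finset.sum_div]
  exact div_div_div_cancel_right₀ (exp_ne_zero _) _ _

theorem tendsto_headAttn_atTop {k din p : ℕ} (hk : 0 < k)
    {Wq Wk : Matrix (Fin k) (Fin din) ℝ} {x : Fin p → Fin din → ℝ} {i m : Fin p}
    (hm : ∀ j, j ≠ m → Wq *ᵥ x i ⬝ᵥ Wk *ᵥ x j < Wq *ᵥ x i ⬝ᵥ Wk *ᵥ x m) :
    Tendsto (fun T => headAttn T Wq Wk x i) atTop (𝓝 (Pi.single m 1)) :=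
  have hsqrt : 0 < √(k : ℝ) := Real.sqrt_pos.2 (Nat.cast_pos.2 hk)
  (tendsto_softmax_atTop hm).comp (tendsto_id.atTop_div_const hsqrt)

theorem tendsto_attnBlock_atTop {k din dout p H : ℕ} (hk : 0 < k)
    {Wq Wk : Fin H → Matrix (Fin k) (Fin din) ℝ} (Wv : Fin H → Matrix (Fin dout) (Fin din) ℝ)
    {x : Fin p → Fin din → ℝ} {i : Fin p} {τ : Fin H → Fin p}
    (hτ : ∀ h j, j ≠ τ h →
      Wq h *ᵥ x i ⬝ᵥ Wk h *ᵥ x j < Wq h *ᵥ x i ⬝ᵥ Wk h *ᵥ x (τ h)) :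
    Tendsto (fun T => attnBlock T Wq Wk Wv x i) atTop (𝓝 (∑ h, Wv h *ᵥ x (τ h))) := by
  refine tendsto_finsetSum _ fun h _ => ?_
  have hweights := tendsto_pi_nhds.1 (tendsto_headAttn_atTop hk (hτ h))
  simpa [Pi.single_apply] using
    tendsto_finsetSum Finset.univ fun j _ => (hweights j).smul_const (Wv h *ᵥ x j)

theorem posEnc_val {N : ℕ} (i : Fin N) : posEnc N i = Pi.single i 1 := by
  ext n
  simp [posEnc, Pi.single_apply, Fin.ext_iff]

theorem posEnc_dotProduct_posEnc {N i j : ℕ} (hj : j < N) :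
    posEnc N i ⬝ᵥ posEnc N j = if j = i then 1 else 0 := by
  lift j to Fin N using hj
  rw [posEnc_val, dotProduct_single_one, posEnc]

/-- The block row matrix `[A | B]`, with columns indexed by `Fin (a + b)` so that it acts on
concatenations `[v; w]` of an embedding and a position encoding. -/
def blockRow {m a b : ℕ} (A : Matrix (Fin m) (Fin a) ℝ) (B : Matrix (Fin m) (Fin b) ℝ) :
    Matrix (Fin m) (Fin (a + b)) ℝ :=
  (fromCols A B).submatrix id finSumFinEquiv.symm

theorem blockRow_mulVec_append {m a b : ℕ} (A : Matrix (Fin m) (Fin a) ℝ)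
    (B : Matrix (Fin m) (Fin b) ℝ) (v : Fin a → ℝ) (w : Fin b → ℝ) :
    blockRow A B *ᵥ Fin.append v w = A *ᵥ v + B *ᵥ w := by
  have happend : Fin.append v w = Sum.elim v w ∘ finSumFinEquiv.symm := by
    rw [Equiv.eq_comp_symm]
    exact Fin.append_comp_sumElim
  rw [blockRow, submatrix_mulVec_equiv, happend, Equiv.symm_symm, Function.comp_assoc,
    Equiv.symm_comp_self, Function.comp_id, Function.comp_id, fromCols_mulVec_sumElim]

/-- The transformer input `[v_j; e_N(j)]` built from the embedding vectors `v_0, …, v_{p-1}`. -/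
def withPosEnc (N : ℕ) {p d : ℕ} (v : Fin p → Fin d → ℝ) : Fin p → Fin (d + N) → ℝ :=
  fun j => Fin.append (v j) (posEnc N j)

theorem tendsto_attnBlock_withPosEnc {N d dout p H : ℕ} (hp : p ≤ N)
    {Q : Fin H → Matrix (Fin N) (Fin N) ℝ} (Wv : Fin H → Matrix (Fin dout) (Fin (d + N)) ℝ)
    (v : Fin p → Fin d → ℝ) {i : Fin p} {τ : Fin H → Fin p}
    (hQ : ∀ h, Q h *ᵥ posEnc N i = posEnc N (τ h)) :
    Tendsto (fun T => attnBlock T (fun h => blockRow 0 (Q h)) (fun _ => blockRow 0 1) Wv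
        (withPosEnc N v) i) atTop (𝓝 (∑ h, Wv h *ᵥ withPosEnc N v (τ h))) := by
  refine tendsto_attnBlock_atTop (i.pos.trans_le hp) Wv fun h j hj => ?_
  have hscore : ∀ r : Fin p,
      blockRow 0 (Q h) *ᵥ withPosEnc N v i ⬝ᵥ blockRow 0 1 *ᵥ withPosEnc N v r
        = if r = τ h then 1 else 0 := by
    intro r
    simp only [withPosEnc, blockRow_mulVec_append, zero_mulVec, one_mulVec, zero_add, hQ,
      posEnc_dotProduct_posEnc (r.isLt.trans_le hp), Fin.val_inj]
  simp [hscore, hj]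

theorem continuous_mlpLayer {a b : ℕ} (M : Matrix (Fin b) (Fin a) ℝ) (bias : Fin b → ℝ)
    (act : Bool) : Continuous (mlpLayer M bias act) := by
  unfold mlpLayer
  cases act <;> simp only [if_true, Bool.false_eq_true, if_false] <;> fun_prop

/-- The three-layer MLP reading off a token from `s + e_i`: select the entry `s_i`, rescale it
to `y = V * s_i`, and output the logits `2 w y - w²`. -/
noncomputable def positionDecoder (V N : ℕ) (t : Fin N → ℝ) : Fin V → ℝ :=
  mlpLayer (of fun w (_ : Fin 1) => 2 * (w : ℝ)) (fun w => -(w : ℝ) ^ 2) false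
    (mlpLayer (of fun _ _ => (V : ℝ)) 0 false
      (mlpLayer (1 : Matrix (Fin N) (Fin N) ℝ) (-1) true t))

theorem continuous_positionDecoder (V N : ℕ) : Continuous (positionDecoder V N) :=
  (continuous_mlpLayer _ _ _).comp ((continuous_mlpLayer _ _ _).comp (continuous_mlpLayer _ _ _))

theorem mlpLayer_one_neg_one_add_posEnc {N : ℕ} {s : Fin N → ℝ} (h0 : 0 ≤ s) (h1 : s ≤ 1)
    (i : Fin N) :
    mlpLayer (1 : Matrix (Fin N) (Fin N) ℝ) (-1) true (s + posEnc N i) = Pi.single i (s i) := by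
  ext n
  rcases eq_or_ne n i with rfl | hn
  · simpa [mlpLayer, posEnc_val] using h0 n
  · simpa [mlpLayer, posEnc_val, hn] using h1 n

theorem positionDecoder_add_posEnc (V : ℕ) {N : ℕ} {s : Fin N → ℝ} (h0 : 0 ≤ s) (h1 : s ≤ 1)
    (i : Fin N) (w : Fin V) :
    positionDecoder V N (s + posEnc N i) w = 2 * w * (V * s i) - (w : ℝ) ^ 2 := by
  rw [positionDecoder, mlpLayer_one_neg_one_add_posEnc h0 h1]
  simp [mlpLayer, mulVec, dotProduct, Pi.single_apply, sub_eq_add_neg]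

theorem positionDecoder_lt_of_ne {V N : ℕ} (Y : Fin N → Fin V) (i : Fin N) {u : Fin V}
    (hu : u ≠ Y i) :
    positionDecoder V N ((fun n => (Y n : ℝ) / V) + posEnc N i) u
      < positionDecoder V N ((fun n => (Y n : ℝ) / V) + posEnc N i) (Y i) := by
  have hV : (V : ℝ) ≠ 0 := by exact_mod_cast u.pos.ne'
  have h0 : (0 : Fin N → ℝ) ≤ fun n => (Y n : ℝ) / V := fun n => by positivity
  have h1 : (fun n => (Y n : ℝ) / V) ≤ (1 : Fin N → ℝ) := fun n =>
    div_le_one_of_le₀ (Nat.cast_le.2 (Y n).isLt.le) (by positivity)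
  have hgap : (0 : ℝ) < ((u : ℝ) - Y i) ^ 2 := by
    have hcast : (u : ℝ) ≠ Y i := Nat.cast_injective.ne (Fin.val_ne_of_ne hu)
    exact sq_pos_of_ne_zero (sub_ne_zero.2 hcast)
  rw [positionDecoder_add_posEnc V h0 h1, positionDecoder_add_posEnc V h0 h1,
    mul_div_cancel₀ _ hV]
  linarith

/-- The embedding vectors `v_0, …, v_i` seen at generation step `i` (counted from `0`): the virtual
token `s`, then the embedding columns of the tokens `Y 0, …, Y (i - 1)`. -/
def virtualTokenEmbedding {d V N : ℕ} (E : Matrix (Fin d) (Fin V) ℝ) (s : Fin d → ℝ)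
    (Y : Fin N → Fin V) (i : Fin N) : Fin ((i : ℕ) + 1) → Fin d → ℝ :=
  Fin.cons (α := fun _ => Fin d → ℝ) s fun r => E.col (Y (Fin.castLE i.isLt.le r))

/-- Position-to-position query maps of the two heads: the first sends every position encoding to
`e_0`, pointing at the virtual token, and the second sends each position to itself. -/
def pointerQuery (N : ℕ) : Fin 2 → Matrix (Fin N) (Fin N) ℝ :=
  ![replicateCol (Fin N) (posEnc N 0), 1]

/-- Value maps of the two heads: the first extracts the embedding (here of dimension `N`), the
second the position encoding. -/
def pointerValue (N : ℕ) : Fin 2 → Matrix (Fin N) (Fin (N + N)) ℝ :=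
  ![blockRow 1 0, blockRow 0 1]

theorem tendsto_attnBlock_virtualTokenEmbedding {V N : ℕ} (E : Matrix (Fin N) (Fin V) ℝ)
    (s : Fin N → ℝ) (Y : Fin N → Fin V) (i : Fin N) :
    Tendsto (fun T => attnBlock T (fun h => blockRow 0 (pointerQuery N h)) (fun _ => blockRow 0 1)
        (pointerValue N) (withPosEnc N (virtualTokenEmbedding E s Y i)) (Fin.last i))
      atTop (𝓝 (s + posEnc N i)) := by
  have hquery : ∀ h, pointerQuery N h *ᵥ posEnc N (Fin.last (i : ℕ))
      = posEnc N (![0, Fin.last (i : ℕ)] h) := by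
    intro h
    fin_cases h
    · ext n
      simp [pointerQuery, posEnc_val]
    · simp [pointerQuery]
  have hzero : virtualTokenEmbedding E s Y i 0 = s := rfl
  simpa [pointerValue, withPosEnc, blockRow_mulVec_append, hzero] using
    tendsto_attnBlock_withPosEnc i.isLt (pointerValue N) (virtualTokenEmbedding E s Y i) hquery

theorem virtual_token_unconditional_generation_general (V N : ℕ) :
    ∃ (k dout d1 d2 : ℕ)
      (Wq Wk : Fin 2 → Matrix (Fin k) (Fin (N + N)) ℝ)
      (Wv : Fin 2 → Matrix (Fin dout) (Fin (N + N)) ℝ)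
      (M1 : Matrix (Fin d1) (Fin dout) ℝ) (b1 : Fin d1 → ℝ) (a1 : Bool)
      (M2 : Matrix (Fin d2) (Fin d1) ℝ) (b2 : Fin d2 → ℝ) (a2 : Bool)
      (M3 : Matrix (Fin V) (Fin d2) ℝ) (b3 : Fin V → ℝ) (a3 : Bool),
    ∀ E : Matrix (Fin N) (Fin V) ℝ, ∀ᶠ T in atTop, ∀ (Y : Fin N → Fin V) (i : Fin N),
      let logits : Fin V → ℝ :=
        mlpLayer M3 b3 a3 (mlpLayer M2 b2 a2 (mlpLayer M1 b1 a1
          (attnBlock T Wq Wk Wv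
            (withPosEnc N (virtualTokenEmbedding E (fun n => (Y n : ℝ) / V) Y i))
            (Fin.last (i : ℕ)))))
      ∀ u : Fin V, u ≠ Y i → logits u < logits (Y i) := by
  refine ⟨N, N, N, 1, fun h => blockRow 0 (pointerQuery N h), fun _ => blockRow 0 1,
    pointerValue N, 1, -1, true, of fun _ _ => V, 0, false, of fun w _ => 2 * w,
    fun w => -(w : ℝ) ^ 2, false, fun E => ?_⟩
  simp only [eventually_all]
  intro Y i u hu
  have hlogits := ((continuous_positionDecoder V N).tendsto _).comp
    (tendsto_attnBlock_virtualTokenEmbedding E (fun n => (Y n : ℝ) / V) Y i)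
  exact (tendsto_pi_nhds.1 hlogits u).eventually_lt (tendsto_pi_nhds.1 hlogits (Y i))
    (positionDecoder_lt_of_ne Y i hu)

/-- **Exponential unconditional generation capacity of a single virtual token.**
For any `V, N > 0` there is a transformer with vocabulary size `V`, context size `N`, embedding
size `d_e = N`, one attention layer with two heads and a three-layer MLP such that greedy
autoregressive generation started from the single virtual token
`s₁ = ((Y₁−1)/V, ..., (Y_N−1)/V)` produces exactly the sequence `(Y₁, ..., Y_N)` (tokens are
`0`-indexed as `Fin V`, so `(Y i : ℝ)/V` stands for `(Yᵢ−1)/V`): at each step `i`, with input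
consisting of `s₁` followed by the embeddings of `Y₁, ..., Y_{i−1}`, the logits at the last
position attain their strict maximum at `Y i`. -/
theorem virtual_token_unconditional_generation (V N : ℕ) (hV : 0 < V) (hN : 0 < N) :
    ∃ (k dout d1 d2 : ℕ) (T : ℝ), 0 < T ∧
    ∃ (E : Matrix (Fin N) (Fin V) ℝ)
      (Wq Wk : Fin 2 → Matrix (Fin k) (Fin (N + N)) ℝ)
      (Wv : Fin 2 → Matrix (Fin dout) (Fin (N + N)) ℝ)
      (M1 : Matrix (Fin d1) (Fin dout) ℝ) (b1 : Fin d1 → ℝ) (a1 : Bool)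
      (M2 : Matrix (Fin d2) (Fin d1) ℝ) (b2 : Fin d2 → ℝ) (a2 : Bool)
      (M3 : Matrix (Fin V) (Fin d2) ℝ) (b3 : Fin V → ℝ) (a3 : Bool),
    ∀ (Y : Fin N → Fin V) (i : Fin N),
      let s1 : Fin N → ℝ := fun n => (Y n : ℝ) / V
      let emb : Fin ((i : ℕ) + 1) → Fin N → ℝ :=
        Fin.cases s1 (fun j => fun n => E n (Y (Fin.castLE i.isLt.le j)))
      let x : Fin ((i : ℕ) + 1) → Fin (N + N) → ℝ :=
        fun j => Fin.append (emb j) (posEnc N (j : ℕ))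
      let logits : Fin V → ℝ :=
        mlpLayer M3 b3 a3 (mlpLayer M2 b2 a2 (mlpLayer M1 b1 a1
          (attnBlock T Wq Wk Wv x (Fin.last (i : ℕ)))))
      ∀ u : Fin V, u ≠ Y i → logits u < logits (Y i) := by
  obtain ⟨k, dout, d1, d2, Wq, Wk, Wv, M1, b1, a1, M2, b2, a2, M3, b3, a3, h⟩ :=
    virtual_token_unconditional_generation_general V N
  obtain ⟨T, hgen, hT⟩ := ((h 0).and (eventually_gt_atTop 0)).exists
  exact ⟨k, dout, d1, d2, T, hT, 0, Wq, Wk, Wv, M1, b1, a1, M2, b2, a2, M3, b3, a3, hgen⟩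
end

section
/- For every vocabulary size V > 0, there exist a transformer (of the simplified decoder-only form described in the context) with vocabulary size V, context size N = 2, embedding dimension d_e = V, a single attention block with two heads, a three-layer MLP, and an inverse temperature T > 0, such that for every map m : {1,...,V} → {1,...,V} and every user token X ∈ {1,...,V}, when the input consists of the virtual token s_1 = (m(1)/V, ..., m(V)/V) at position 1 followed by the embedding of X at position 2, the argmax of the output logits at position 2 equals m(X). In particular, by selecting the single virtual token s_1 one can realize any of the V^V maps from a user input token to a model response token. -/
open Matrix Real

/-!
With zero query matrices the attention is uniform, so as many heads as positions sum the values of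
all positions. The first `V` coordinates of this sum are `s₁ + e_X`, and as `s₁` takes values in
`[0, 1]`, the layer `ReLU(x - 1)` keeps exactly its `X`-th coordinate `m(X)/V`. After rescaling to
`y = m(X)`, the affine logits `2uy - u² = y² - (u - y)²` are maximal exactly at `u = m(X)`.
-/

section Attention

variable {k din dout p H : ℕ}

theorem headAttn_zero_query (T : ℝ) (Wk : Matrix (Fin k) (Fin din) ℝ)
    (x : Fin p → Fin din → ℝ) (i j : Fin p) : headAttn T 0 Wk x i j = (p : ℝ)⁻¹ := by
  simp [headAttn]

theorem attnBlock_zero_query (T : ℝ) (Wk : Fin H → Matrix (Fin k) (Fin din) ℝ)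
    (Wv : Fin H → Matrix (Fin dout) (Fin din) ℝ) (x : Fin p → Fin din → ℝ) (i : Fin p) :
    attnBlock T 0 Wk Wv x i = (p : ℝ)⁻¹ • (∑ h, Wv h) *ᵥ ∑ j, x j := by
  simp only [attnBlock, Pi.zero_apply, headAttn_zero_query, ← Finset.smul_sum,
    ← Matrix.mulVec_sum, Matrix.sum_mulVec]

theorem attnBlock_zero_query_const_value (T : ℝ) (Wk : Fin p → Matrix (Fin k) (Fin din) ℝ)
    (W : Matrix (Fin dout) (Fin din) ℝ) (x : Fin p → Fin din → ℝ) (i : Fin p) :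
    attnBlock T 0 Wk (fun _ => W) x i = W *ᵥ ∑ j, x j := by
  have hp : (p : ℝ) ≠ 0 := Nat.cast_ne_zero.mpr i.pos.ne'
  rw [attnBlock_zero_query, Fin.sum_const, ← Nat.cast_smul_eq_nsmul ℝ, Matrix.smul_mulVec,
    inv_smul_smul₀ hp]

end Attention

/-- The coordinate projection `ℝ^{d+N} → ℝ^d` that discards the position encoding from an input
`[v; e]`. -/
def embeddingProj (d N : ℕ) : Matrix (Fin d) (Fin (d + N)) ℝ :=
  (1 : Matrix (Fin (d + N)) (Fin (d + N)) ℝ).submatrix (Fin.castAdd N) id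

theorem embeddingProj_mulVec_append {d N : ℕ} (v : Fin d → ℝ) (e : Fin N → ℝ) :
    embeddingProj d N *ᵥ Fin.append v e = v := by
  ext u
  calc (embeddingProj d N *ᵥ Fin.append v e) u
      = ((1 : Matrix (Fin (d + N)) (Fin (d + N)) ℝ) *ᵥ Fin.append v e) (Fin.castAdd N u) := rfl
    _ = v u := by rw [Matrix.one_mulVec, Fin.append_left]

section Layers

variable {a b n d : ℕ}

theorem mlpLayer_false (M : Matrix (Fin b) (Fin a) ℝ) (c : Fin b → ℝ) (x : Fin a → ℝ) :
    mlpLayer M c false x = M *ᵥ x + c := rfl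

theorem mlpLayer_relu_gate {s : Fin n → ℝ} {X : Fin n} (hX : 0 ≤ s X)
    (hs : ∀ v ≠ X, s v ≤ 1) :
    mlpLayer 1 (-1) true (s + Pi.single X 1) = Pi.single X (s X) := by
  ext v
  rcases eq_or_ne v X with rfl | hv
  · simp [mlpLayer, hX]
  · simp [mlpLayer, hv, hs v hv]

theorem mlpLayer_const_weight (c : ℝ) (x : Fin a → ℝ) :
    mlpLayer (Matrix.of fun (_ : Fin b) _ => c) 0 false x = fun _ => c * ∑ i, x i := by
  ext
  simp only [mlpLayer_false, add_zero, Matrix.mulVec, dotProduct, Matrix.of_apply,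
    Finset.mul_sum]

/-- Nearest-codeword decoding, with the rows of `C` as codewords: it is affine because the term
`|y|²` of `|C u - y|²` does not depend on `u`. -/
theorem mlpLayer_nearest_codeword_lt {C : Matrix (Fin n) (Fin d) ℝ} {u w : Fin n}
    (huw : C u ≠ C w) :
    mlpLayer ((2 : ℝ) • C) (fun v => -(C v ⬝ᵥ C v)) false (C w) u <
      mlpLayer ((2 : ℝ) • C) (fun v => -(C v ⬝ᵥ C v)) false (C w) w := by
  have logit (v : Fin n) : mlpLayer ((2 : ℝ) • C) (fun v => -(C v ⬝ᵥ C v)) false (C w) v =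
      C w ⬝ᵥ C w - (C v - C w) ⬝ᵥ (C v - C w) := by
    simp only [mlpLayer_false, Matrix.smul_mulVec, Pi.add_apply, Pi.smul_apply, smul_eq_mul,
      Matrix.mulVec, sub_dotProduct, dotProduct_sub, dotProduct_comm (C w) (C v)]
    ring
  have dist_pos : 0 < (C u - C w) ⬝ᵥ (C u - C w) := by
    simpa using dotProduct_star_self_pos_iff.mpr (sub_ne_zero.mpr huw)
  rw [logit, logit, sub_self, zero_dotProduct]
  exact sub_lt_sub_left dist_pos _

end Layers

/-- The one-dimensional code of the vocabulary: token `u`, counted from `1` as in `{1, …, V}`, has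
the codeword `u`. -/
def tokenCode (V : ℕ) : Matrix (Fin V) (Fin 1) ℝ := Matrix.of fun u _ => (u : ℝ) + 1

theorem tokenCode_injective (V : ℕ) : Function.Injective (tokenCode V) := by
  intro u w h
  simpa [tokenCode, Fin.val_inj] using congrFun h 0

theorem tokenCode_div_mem_Icc {V : ℕ} (u : Fin V) : tokenCode V u 0 / V ∈ Set.Icc 0 1 := by
  have hu : (u : ℝ) + 1 ≤ V := by exact_mod_cast u.isLt
  exact ⟨div_nonneg u.val.cast_add_one_pos.le V.cast_nonneg, div_le_one_of_le₀ hu V.cast_nonneg⟩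

/-- **Conditional generation capacity of a single virtual token (`n_X = n_Y = 1`).**
For any `V > 0` there is a transformer with vocabulary size `V`, context size `N = 2`, embedding
size `d_e = V`, one attention layer with two heads and a three-layer MLP that reproduces any map
`m : {1,...,V} → {1,...,V}` when conditioned on the single virtual token
`s₁ = (m(1)/V, ..., m(V)/V)` (tokens are `0`-indexed as `Fin V`, so `((m v : ℕ)+1)/V` stands for
`m(v)/V`): for every user token `X`, the output logits at position 2 attain their strict maximum
at `m X`. -/
theorem virtual_token_conditional_generation (V : ℕ) (hV : 0 < V) :
    ∃ (k dout d1 d2 : ℕ) (T : ℝ), 0 < T ∧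
    ∃ (E : Matrix (Fin V) (Fin V) ℝ)
      (Wq Wk : Fin 2 → Matrix (Fin k) (Fin (V + 2)) ℝ)
      (Wv : Fin 2 → Matrix (Fin dout) (Fin (V + 2)) ℝ)
      (M1 : Matrix (Fin d1) (Fin dout) ℝ) (b1 : Fin d1 → ℝ) (a1 : Bool)
      (M2 : Matrix (Fin d2) (Fin d1) ℝ) (b2 : Fin d2 → ℝ) (a2 : Bool)
      (M3 : Matrix (Fin V) (Fin d2) ℝ) (b3 : Fin V → ℝ) (a3 : Bool),
    ∀ (m : Fin V → Fin V) (X : Fin V),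
      let s1 : Fin V → ℝ := fun v => ((m v : ℕ) + 1 : ℝ) / V
      let x : Fin 2 → Fin (V + 2) → ℝ :=
        ![Fin.append s1 (posEnc 2 0), Fin.append (fun n => E n X) (posEnc 2 1)]
      let logits : Fin V → ℝ :=
        mlpLayer M3 b3 a3 (mlpLayer M2 b2 a2 (mlpLayer M1 b1 a1
          (attnBlock T Wq Wk Wv x 1)))
      ∀ u : Fin V, u ≠ m X → logits u < logits (m X) := by
  refine ⟨1, V, V, 1, 1, one_pos, 1, 0, 0, fun _ => embeddingProj V 2, 1, -1, true,
    Matrix.of fun _ _ => (V : ℝ), 0, false,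
    (2 : ℝ) • tokenCode V, fun u => -(tokenCode V u ⬝ᵥ tokenCode V u), false, ?_⟩
  intro m X s1 x logits u hu
  have hs1 (v : Fin V) : s1 v ∈ Set.Icc 0 1 := tokenCode_div_mem_Icc (m v)
  have embedding : (fun n => (1 : Matrix (Fin V) (Fin V) ℝ) n X) = Pi.single X 1 :=
    Matrix.col_diagonal 1 X
  have attention : attnBlock (k := 1) (H := 2) 1 0 0 (fun _ => embeddingProj V 2) x 1 =
      s1 + Pi.single X 1 := by
    simp only [attnBlock_zero_query_const_value, Fin.sum_univ_two, Matrix.mulVec_add, x,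
      Matrix.cons_val_zero, Matrix.cons_val_one, embeddingProj_mulVec_append, embedding]
  have gate : mlpLayer 1 (-1) true (s1 + Pi.single X 1) = Pi.single X (s1 X) :=
    mlpLayer_relu_gate (hs1 X).1 fun v _ => (hs1 v).2
  have rescale : mlpLayer (Matrix.of fun _ _ => (V : ℝ)) 0 false (Pi.single X (s1 X)) =
      tokenCode V (m X) := by
    rw [mlpLayer_const_weight, Finset.sum_pi_single', if_pos (Finset.mem_univ X),
      mul_div_cancel₀ _ (Nat.cast_ne_zero.mpr hV.ne')]
    rfl
  simpa only [logits, attention, gate, rescale] using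
    mlpLayer_nearest_codeword_lt ((tokenCode_injective V).ne hu)
end

section
/- Let c > 0, H ∈ ℝ^{d×d}, W_V ∈ ℝ^{m×d}, let x_1, ..., x_p ∈ ℝ^d be content inputs and s ∈ ℝ^d a prefix vector. Define the pretrained attention A_{ij} = exp(c·x_iᵀHx_j) / Σ_{r=1}^p exp(c·x_iᵀHx_r) and pretrained attention output t_i = Σ_{j=1}^p A_{ij} W_V x_j, and the prefix-tuned attention A^pt_{i0} = exp(c·x_iᵀHs)/D_i, A^pt_{ij} = exp(c·x_iᵀHx_j)/D_i with D_i = exp(c·x_iᵀHs) + Σ_{r=1}^p exp(c·x_iᵀHx_r), and prefix-tuned output t^pt_i = A^pt_{i0} W_V s + Σ_{j=1}^p A^pt_{ij} W_V x_j. Then for every position i: t^pt_i = A^pt_{i0}·W_V s + (1 − A^pt_{i0})·t_i, with A^pt_{i0} ∈ (0,1). That is, the prefix-tuned output is a strict convex combination of the pretrained output t_i and the constant vector W_V s, which is independent of the content (x_1,...,x_p); the prefix can only bias the attention output towards the fixed direction W_V s. -/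
open Matrix Real

/-- The softmax distribution of a family of real scores. -/
noncomputable def softmax {ι : Type*} [Fintype ι] (a : ι → ℝ) (j : ι) : ℝ :=
  exp (a j) / ∑ r, exp (a r)

/-- The output of softmax attention at one query: the average of the values `v`, weighted by the
softmax of the scores `a` of the keys against that query. A prefix is modelled by indexing the
positions with `Option ι`, the prefix being `none`. -/
noncomputable def softmaxAttention {ι E : Type*} [Fintype ι] [AddCommMonoid E] [Module ℝ E]
    (a : ι → ℝ) (v : ι → E) : E :=
  ∑ j, softmax a j • v j

section

variable {ι : Type*} [Fintype ι]

theorem sum_exp_pos [Nonempty ι] (a : ι → ℝ) : 0 < ∑ r, exp (a r) :=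
  Finset.sum_pos (fun r _ => exp_pos (a r)) Finset.univ_nonempty

theorem softmax_pos (a : ι → ℝ) (j : ι) : 0 < softmax a j :=
  have : Nonempty ι := ⟨j⟩
  div_pos (exp_pos (a j)) (sum_exp_pos a)

theorem softmax_lt_one [Nontrivial ι] (a : ι → ℝ) (j : ι) : softmax a j < 1 := by
  obtain ⟨k, hkj⟩ := exists_ne j
  rw [softmax, div_lt_one (sum_exp_pos a)]
  exact Finset.single_lt_sum hkj (Finset.mem_univ j) (Finset.mem_univ k) (exp_pos (a k))
    fun r _ _ => (exp_pos (a r)).le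

theorem one_sub_softmax_none (a : Option ι → ℝ) :
    1 - softmax a none = (∑ j, exp (a (some j))) / ∑ r, exp (a r) := by
  rw [softmax, one_sub_div (sum_exp_pos a).ne', Fintype.sum_option, add_sub_cancel_left]

/- The prefix only enlarges the common normalizer, so all other weights shrink by the same factor:
they are the softmax without the prefix, spread over the mass that the prefix leaves. -/
theorem softmax_some (a : Option ι → ℝ) (j : ι) :
    softmax a (some j) = (1 - softmax a none) * softmax (fun k => a (some k)) j := by
  have : Nonempty ι := ⟨j⟩
  have hsum : ∑ k, exp (a (some k)) ≠ 0 := (sum_exp_pos fun k => a (some k)).ne'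
  rw [one_sub_softmax_none, softmax, softmax, div_mul_div_cancel₀' hsum]

theorem softmaxAttention_option {E : Type*} [AddCommMonoid E] [Module ℝ E]
    (a : Option ι → ℝ) (v : Option ι → E) :
    softmaxAttention a v = softmax a none • v none +
      (1 - softmax a none) • softmaxAttention (fun j => a (some j)) (fun j => v (some j)) := by
  simp only [softmaxAttention, Fintype.sum_option, softmax_some, mul_smul, Finset.smul_sum]

theorem prefix_biases_attention_output_general [Nonempty ι] {E : Type*} [AddCommMonoid E]
    [Module ℝ E] (a : Option ι → ℝ) (v : Option ι → E) :
    softmaxAttention a v = softmax a none • v none +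
        (1 - softmax a none) • softmaxAttention (fun j => a (some j)) (fun j => v (some j)) ∧
      softmax a none ∈ Set.Ioo (0 : ℝ) 1 :=
  ⟨softmaxAttention_option a v, softmax_pos a none, softmax_lt_one a none⟩

end

/-- **A single prefix vector only biases the attention block output in a fixed direction.**
With pretrained attention output `t_i = Σ_j A_{ij} W_V x_j` and prefix-tuned output
`t^pt_i = A^pt_{i0} W_V s + Σ_j A^pt_{ij} W_V x_j`, for every position `i` we have
`t^pt_i = A^pt_{i0} W_V s + (1 − A^pt_{i0}) t_i` with `A^pt_{i0} ∈ (0,1)`: the prefix-tuned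
output is a strict convex combination of the pretrained output and the constant vector `W_V s`,
which is independent of the content. -/
theorem prefix_biases_attention_output {d m p : ℕ} (hp : 0 < p) (c : ℝ) (hc : 0 < c)
    (H : Matrix (Fin d) (Fin d) ℝ) (Wv : Matrix (Fin m) (Fin d) ℝ)
    (x : Fin p → Fin d → ℝ) (s : Fin d → ℝ) (i : Fin p) :
    let A : Fin p → ℝ := fun j =>
      exp (c * (x i ⬝ᵥ H.mulVec (x j))) / ∑ r, exp (c * (x i ⬝ᵥ H.mulVec (x r)))
    let D : ℝ := exp (c * (x i ⬝ᵥ H.mulVec s)) + ∑ r, exp (c * (x i ⬝ᵥ H.mulVec (x r)))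
    let Apt0 : ℝ := exp (c * (x i ⬝ᵥ H.mulVec s)) / D
    let Apt : Fin p → ℝ := fun j => exp (c * (x i ⬝ᵥ H.mulVec (x j))) / D
    let t : Fin m → ℝ := ∑ j, A j • Wv.mulVec (x j)
    let tpt : Fin m → ℝ := Apt0 • Wv.mulVec s + ∑ j, Apt j • Wv.mulVec (x j)
    tpt = Apt0 • Wv.mulVec s + (1 - Apt0) • t ∧ Apt0 ∈ Set.Ioo (0 : ℝ) 1 := by
  have : Nonempty (Fin p) := ⟨i⟩
  simpa only [softmaxAttention, softmax, Fintype.sum_option, Option.elim] using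
    prefix_biases_attention_output_general (fun o => c * (x i ⬝ᵥ H.mulVec (o.elim s x)))
      (fun o => Wv.mulVec (o.elim s x))
end
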